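/- Fix integers A ≥ 2 and z ≥ 1 with A ≥ z, and a real v ≥ 0. For 0 < q < 1/2 set p = 1 − q, λ = q/p, [n] = (1 − λ^n)/(1 − λ), P_A(z) = (I_{4pq}(z,1/2) − λ^{A+1})/(1 − λ^{A+1}), and R(q) = (q z/(2p)) I_{4pq}(z,1/2) − ((A+1)λ^{A+1}/(p(1−λ)^3 [A+1]^2)) I_{(p−q)^2}(1/2,z) + ((2−λ+λ^{A+2})/((1−λ)^2[A+1])) p^{z−1}q^z/B(z,z) + P_A(z)(v+1). Then R(q)/q^z → 2 C(2z−1, z)(v+1) + 2/B(z,z) as q → 0⁺, where C(n,k) denotes the binomial coefficient. -/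

import Mathlib

open scoped BigOperators
open Filter

/-- The Beta function `B(a,b) = ∫_0^1 t^(a-1) (1-t)^(b-1) dt`. -/
noncomputable def Beta (a b : ℝ) : ℝ :=
  ∫ t in (0:ℝ)..1, t ^ (a - 1) * (1 - t) ^ (b - 1)

/-- The regularized incomplete Beta function
`I_x(a,b) = (1/B(a,b)) ∫_0^x t^(a-1) (1-t)^(b-1) dt`. -/
noncomputable def regBeta (x a b : ℝ) : ℝ :=
  (∫ t in (0:ℝ)..x, t ^ (a - 1) * (1 - t) ^ (b - 1)) / Beta a b

/-!
As `x → 0⁺`, `I_x(a,b) ~ x^a / (a B(a,b))`. Take `x = 4pq ~ 4q`, `a = z`, `b = 1/2`: by Legendre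
duplication `B(z,1/2) = 2^(2z-1) B(z,z)`, so the powers of two cancel up to a factor `2` and
`I_{4pq}(z,1/2) ~ 2 q^z / (z B(z,z))`. The first term of `R` has an additional factor `q`, and
`λ^(A+1) = o(q^z)` since `λ ~ q` and `A + 1 > z`, so only `P_A(z)(v+1)` and the term in `1/B(z,z)`
contribute to the limit. For an integer `z`, `1/B(z,z) = z C(2z-1,z)`.
-/

open Set Topology

/-! ### The Beta function -/

lemma Beta_eq_beta {a b : ℝ} (ha : 0 < a) (hb : 0 < b) :
    Beta a b = ProbabilityTheory.beta a b := by
  have integral_eq : ∫ t in (0 : ℝ)..1, (t : ℂ) ^ ((a : ℂ) - 1) * (1 - (t : ℂ)) ^ ((b : ℂ) - 1)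
      = ∫ t in (0 : ℝ)..1, ((t ^ (a - 1) * (1 - t) ^ (b - 1) : ℝ) : ℂ) := by
    refine intervalIntegral.integral_congr fun t ht ↦ ?_
    rw [uIcc_of_le zero_le_one] at ht
    push_cast [Complex.ofReal_cpow ht.1, Complex.ofReal_cpow (sub_nonneg.2 ht.2)]
    rfl
  rw [ProbabilityTheory.beta_eq_betaIntegralReal a b ha hb, Complex.betaIntegral, integral_eq,
    intervalIntegral.integral_ofReal, Complex.ofReal_re, Beta]

lemma Beta_pos {a b : ℝ} (ha : 0 < a) (hb : 0 < b) : 0 < Beta a b :=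
  Beta_eq_beta ha hb ▸ ProbabilityTheory.beta_pos ha hb

lemma Beta_one_half_right {a : ℝ} (ha : 0 < a) :
    Beta a (1 / 2) = 2 ^ (2 * a - 1) * Beta a a := by
  rw [Beta_eq_beta ha one_half_pos, Beta_eq_beta ha ha, ProbabilityTheory.beta,
    ProbabilityTheory.beta, Real.Gamma_one_half_eq, ← two_mul]
  have duplication := Real.Gamma_mul_Gamma_add_half a
  have two_pow : (2 : ℝ) ^ (2 * a - 1) * 2 ^ (1 - 2 * a) = 1 := by
    rw [← Real.rpow_add two_pos]; simp
  rw [mul_div_assoc', div_eq_div_iff (Real.Gamma_pos_of_pos (by positivity)).ne'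
    (Real.Gamma_pos_of_pos (by positivity)).ne']
  linear_combination (-Real.Gamma a * 2 ^ (2 * a - 1)) * duplication
    - Real.Gamma a * Real.Gamma (2 * a) * √Real.pi * two_pow

lemma one_div_mul_Beta_one_half_mul_four_rpow {a : ℝ} (ha : 0 < a) :
    1 / (a * Beta a (1 / 2)) * 4 ^ a = 2 / (a * Beta a a) := by
  have four_rpow : (4 : ℝ) ^ a = 2 * 2 ^ (2 * a - 1) := by
    rw [Real.rpow_sub_one two_ne_zero, Real.rpow_mul two_pos.le]
    norm_num
    ring
  have := (Beta_pos ha ha).ne'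
  rw [Beta_one_half_right ha, four_rpow]
  field_simp

lemma natCast_mul_choose_mul_Beta_self {n : ℕ} (hn : 0 < n) :
    (n : ℝ) * (2 * n - 1).choose n * Beta n n = 1 := by
  obtain ⟨m, rfl⟩ := Nat.exists_eq_add_one_of_ne_zero hn.ne'
  have choose_factorial := Nat.choose_mul_factorial_mul_factorial
    (show m + 1 ≤ 2 * (m + 1) - 1 by omega)
  rw [show 2 * (m + 1) - 1 = 2 * m + 1 by omega, show 2 * m + 1 - (m + 1) = m by omega,
    Nat.factorial_succ m] at choose_factorial
  have hm : (0 : ℝ) < (m + 1 : ℕ) := by positivity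
  rw [Beta_eq_beta hm hm, ProbabilityTheory.beta, Nat.cast_succ, Real.Gamma_nat_eq_factorial,
    show (m + 1 + (m + 1) : ℝ) = (2 * m + 1 : ℕ) + 1 by push_cast; ring,
    Real.Gamma_nat_eq_factorial, show 2 * (m + 1) - 1 = 2 * m + 1 by omega,
    mul_div_assoc', div_eq_one_iff_eq (by positivity)]
  exact_mod_cast Eq.trans (by ring) choose_factorial

lemma two_div_natCast_mul_Beta_self {n : ℕ} (hn : 0 < n) :
    2 / (n * Beta n n) = 2 * ((2 * n - 1).choose n : ℝ) := by
  have hn' : (0 : ℝ) < n := Nat.cast_pos.2 hn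
  rw [div_eq_iff (mul_pos hn' (Beta_pos hn' hn')).ne']
  linear_combination -2 * natCast_mul_choose_mul_Beta_self hn

/-! ### The incomplete Beta integral -/

lemma continuousOn_one_sub_rpow (r : ℝ) : ContinuousOn (fun t : ℝ ↦ (1 - t) ^ r) (Iio 1) :=
  (continuousOn_const.sub continuousOn_id).rpow_const fun _ ht ↦ .inl (sub_pos.2 ht).ne'

lemma intervalIntegrable_rpow_mul_one_sub_rpow_of_lt_one {a x : ℝ} (ha : 0 < a) (b : ℝ)
    (hx : x < 1) :
    IntervalIntegrable (fun t : ℝ ↦ t ^ (a - 1) * (1 - t) ^ (b - 1)) MeasureTheory.volume 0 x :=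
  (intervalIntegral.intervalIntegrable_rpow' (by linarith)).mul_continuousOn <|
    (continuousOn_one_sub_rpow _).mono fun _ ht ↦ ht.2.trans_lt (max_lt one_pos hx)

lemma intervalIntegrable_rpow_mul_one_sub_rpow {a b : ℝ} (ha : 0 < a) (hb : 0 < b) :
    IntervalIntegrable (fun t : ℝ ↦ t ^ (a - 1) * (1 - t) ^ (b - 1)) MeasureTheory.volume 0 1 := by
  refine (intervalIntegrable_rpow_mul_one_sub_rpow_of_lt_one ha b one_half_lt_one).trans ?_
  have reflected :=
    (intervalIntegrable_rpow_mul_one_sub_rpow_of_lt_one hb a one_half_lt_one).comp_sub_left 1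
  convert! reflected.symm using 1
  · ext t
    rw [sub_sub_cancel, mul_comm]
  · norm_num
  · norm_num

lemma continuousOn_regBeta {a b : ℝ} (ha : 0 < a) (hb : 0 < b) :
    ContinuousOn (fun x ↦ regBeta x a b) (Icc 0 1) := by
  rw [← uIcc_of_le zero_le_one]
  exact (intervalIntegral.continuousOn_primitive_interval'
    (intervalIntegrable_rpow_mul_one_sub_rpow ha hb) left_mem_uIcc).div_const _

lemma hasDerivAt_regBeta {a x : ℝ} (ha : 0 < a) (b : ℝ) (hx0 : 0 < x) (hx1 : x < 1) :
    HasDerivAt (fun y ↦ regBeta y a b) (x ^ (a - 1) * (1 - x) ^ (b - 1) / Beta a b) x := by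
  have cont : ContinuousOn (fun t : ℝ ↦ t ^ (a - 1) * (1 - t) ^ (b - 1)) (Ioo 0 1) :=
    (continuousOn_id.rpow_const fun t ht ↦ .inl ht.1.ne').mul
      ((continuousOn_one_sub_rpow _).mono fun _ ht ↦ ht.2)
  exact (intervalIntegral.integral_hasDerivAt_right
    (intervalIntegrable_rpow_mul_one_sub_rpow_of_lt_one ha b hx1)
    (cont.stronglyMeasurableAtFilter isOpen_Ioo x ⟨hx0, hx1⟩)
    (cont.continuousAt (isOpen_Ioo.mem_nhds ⟨hx0, hx1⟩))).div_const _

lemma tendsto_regBeta_nhdsGT_zero {a b : ℝ} (ha : 0 < a) (hb : 0 < b) :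
    Tendsto (fun x ↦ regBeta x a b) (𝓝[>] 0) (𝓝 0) := by
  have h := (continuousOn_regBeta ha hb) 0 (left_mem_Icc.2 zero_le_one)
  have h' := (h.mono Ioo_subset_Icc_self).tendsto
  rwa [nhdsWithin_Ioo_eq_nhdsGT one_pos, regBeta, intervalIntegral.integral_same, zero_div] at h'

lemma tendsto_regBeta_div_rpow {a b : ℝ} (ha : 0 < a) (hb : 0 < b) :
    Tendsto (fun x ↦ regBeta x a b / x ^ a) (𝓝[>] 0) (𝓝 (1 / (a * Beta a b))) := by
  have near_zero : ∀ᶠ x : ℝ in 𝓝[>] 0, x ∈ Ioo 0 1 := Ioo_mem_nhdsGT one_pos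
  refine HasDerivAt.lhopital_zero_nhdsGT
    (f' := fun x ↦ x ^ (a - 1) * (1 - x) ^ (b - 1) / Beta a b) (g' := fun x ↦ a * x ^ (a - 1))
    ?_ ?_ ?_ (tendsto_regBeta_nhdsGT_zero ha hb) ?_ ?_
  · exact near_zero.mono fun x hx ↦ hasDerivAt_regBeta ha b hx.1 hx.2
  · exact near_zero.mono fun x hx ↦ Real.hasDerivAt_rpow_const (.inl hx.1.ne')
  · exact near_zero.mono fun x hx ↦ (mul_pos ha (Real.rpow_pos_of_pos hx.1 _)).ne'
  · simpa [Real.zero_rpow ha.ne'] using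
      (Real.continuousAt_rpow_const 0 a (.inr ha.le)).tendsto.mono_left nhdsWithin_le_nhds
  · have quotient : Tendsto (fun x : ℝ ↦ (1 - x) ^ (b - 1) / (a * Beta a b)) (𝓝[>] 0)
        (𝓝 (1 / (a * Beta a b))) := by
      have h := ((continuousOn_one_sub_rpow (b - 1)).continuousAt (Iio_mem_nhds one_pos)).div_const
        (a * Beta a b)
      simpa using h.tendsto.mono_left nhdsWithin_le_nhds
    refine quotient.congr' (near_zero.mono fun x hx ↦ ?_)
    have := (Real.rpow_pos_of_pos hx.1 (a - 1)).ne'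
    have := (Beta_pos ha hb).ne'
    field_simp

lemma tendsto_regBeta_four_mul_div_rpow {z : ℝ} (hz : 0 < z) :
    Tendsto (fun q ↦ regBeta (4 * (1 - q) * q) z (1 / 2) / q ^ z) (𝓝[>] 0)
      (𝓝 (2 / (z * Beta z z))) := by
  have near_zero : ∀ᶠ q : ℝ in 𝓝[>] 0, q ∈ Ioo 0 1 := Ioo_mem_nhdsGT one_pos
  have arg : Tendsto (fun q : ℝ ↦ 4 * (1 - q) * q) (𝓝[>] 0) (𝓝[>] 0) := by
    refine tendsto_nhdsWithin_iff.2 ⟨?_, near_zero.mono fun q hq ↦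
      mul_pos (mul_pos four_pos (sub_pos.2 hq.2)) hq.1⟩
    exact ((by fun_prop : Continuous fun q : ℝ ↦ 4 * (1 - q) * q).tendsto' 0 0 (by simp)).mono_left
      nhdsWithin_le_nhds
  have ratio : Tendsto (fun q : ℝ ↦ (4 * (1 - q)) ^ z) (𝓝[>] 0) (𝓝 (4 ^ z)) := by
    have h : Continuous fun q : ℝ ↦ (4 * (1 - q)) ^ z :=
      Continuous.rpow_const (by fun_prop) fun _ ↦ .inr hz.le
    exact (h.tendsto' 0 _ (by simp)).mono_left nhdsWithin_le_nhds
  rw [← one_div_mul_Beta_one_half_mul_four_rpow hz]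
  refine (((tendsto_regBeta_div_rpow hz one_half_pos).comp arg).mul ratio).congr'
    (near_zero.mono fun q hq ↦ ?_)
  have hp : 0 < 4 * (1 - q) := mul_pos four_pos (sub_pos.2 hq.2)
  rw [Function.comp_apply, Real.mul_rpow hp.le hq.1.le]
  have := (Real.rpow_pos_of_pos hp z).ne'
  field_simp

/-! ### The attack revenue -/

/-- The ratio `λ = q / p` of the hashrates of the attacker and of the honest miners, where
`p = 1 - q`. -/
noncomputable def hashRatio (q : ℝ) : ℝ := q / (1 - q)

/-- The paper's `[s] = (1 - r^s) / (1 - r)`, with the base `r` (there `λ`) explicit and the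
exponent allowed to be real. -/
noncomputable def bracket (r s : ℝ) : ℝ := (1 - r ^ s) / (1 - r)

/-- The paper's `P_A(z)`, the probability that an attack cycle succeeds; the integers `A` and `z`
are allowed to be real. -/
noncomputable def successProb (A z q : ℝ) : ℝ :=
  (regBeta (4 * (1 - q) * q) z (1 / 2) - hashRatio q ^ (A + 1)) / (1 - hashRatio q ^ (A + 1))

/-- The paper's `R(q)`, the expected revenue per attack cycle for a double spend of `v` coinbase
units; the integers `A` and `z` are allowed to be real. -/
noncomputable def attackRevenue (A z v q : ℝ) : ℝ :=
  q * z / (2 * (1 - q)) * regBeta (4 * (1 - q) * q) z (1 / 2)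
    - (A + 1) * hashRatio q ^ (A + 1)
        / ((1 - q) * (1 - hashRatio q) ^ 3 * bracket (hashRatio q) (A + 1) ^ 2)
        * regBeta ((1 - q - q) ^ 2) (1 / 2) z
    + (2 - hashRatio q + hashRatio q ^ (A + 2))
        / ((1 - hashRatio q) ^ 2 * bracket (hashRatio q) (A + 1))
        * ((1 - q) ^ (z - 1) * q ^ z / Beta z z)
    + successProb A z q * (v + 1)

lemma tendsto_one_sub_zero : Tendsto (fun q : ℝ ↦ 1 - q) (𝓝 0) (𝓝 1) := by
  simpa using tendsto_const_nhds.sub (tendsto_id (α := ℝ) (x := 𝓝 0))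

lemma tendsto_hashRatio_zero : Tendsto hashRatio (𝓝 0) (𝓝 0) := by
  simpa using! tendsto_id.div tendsto_one_sub_zero one_ne_zero

lemma tendsto_one_sub_hashRatio : Tendsto (fun q ↦ 1 - hashRatio q) (𝓝 0) (𝓝 1) := by
  simpa using tendsto_const_nhds.sub tendsto_hashRatio_zero

lemma tendsto_hashRatio_rpow_zero {s : ℝ} (hs : 0 < s) :
    Tendsto (fun q ↦ hashRatio q ^ s) (𝓝 0) (𝓝 0) := by
  simpa [Real.zero_rpow hs.ne'] using tendsto_hashRatio_zero.rpow_const (.inr hs.le)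

lemma tendsto_bracket_hashRatio {s : ℝ} (hs : 0 < s) :
    Tendsto (fun q ↦ bracket (hashRatio q) s) (𝓝 0) (𝓝 1) := by
  simpa [bracket, Pi.div_def] using (tendsto_const_nhds.sub (tendsto_hashRatio_rpow_zero hs)).div
    tendsto_one_sub_hashRatio one_ne_zero

lemma tendsto_hashRatio_rpow_div_rpow {s t : ℝ} (hts : t < s) :
    Tendsto (fun q ↦ hashRatio q ^ s / q ^ t) (𝓝[>] 0) (𝓝 0) := by
  have h : Tendsto (fun q : ℝ ↦ q ^ (s - t) / (1 - q) ^ s) (𝓝 0) (𝓝 0) := by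
    have hst := sub_pos.2 hts
    simpa [Pi.div_def, Real.zero_rpow hst.ne'] using (tendsto_id.rpow_const (.inr hst.le)).div
      (tendsto_one_sub_zero.rpow_const (.inl one_ne_zero)) (by simp)
  refine (h.mono_left nhdsWithin_le_nhds).congr' ?_
  filter_upwards [Ioo_mem_nhdsGT one_pos] with q hq
  rw [hashRatio, Real.div_rpow hq.1.le (sub_pos.2 hq.2).le, Real.rpow_sub hq.1, div_right_comm]

lemma tendsto_regBeta_sq_nhdsGT_zero {a b : ℝ} (ha : 0 < a) (hb : 0 < b) :
    Tendsto (fun q : ℝ ↦ regBeta ((1 - q - q) ^ 2) a b) (𝓝[>] 0) (𝓝 (regBeta 1 a b)) := by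
  refine (continuousOn_regBeta ha hb 1 (right_mem_Icc.2 zero_le_one)).tendsto.comp ?_
  refine tendsto_nhdsWithin_iff.2 ⟨?_, ?_⟩
  · exact ((by fun_prop : Continuous fun q : ℝ ↦ (1 - q - q) ^ 2).tendsto' 0 1 (by simp)).mono_left
      nhdsWithin_le_nhds
  · filter_upwards [Ioo_mem_nhdsGT one_pos] with q hq
    exact ⟨sq_nonneg _, by nlinarith [hq.1, hq.2]⟩

section Terms

variable {A z : ℝ}

lemma tendsto_mul_regBeta_four_mul_div_rpow (hz : 0 < z) :
    Tendsto (fun q ↦ q * z / (2 * (1 - q)) * regBeta (4 * (1 - q) * q) z (1 / 2) / q ^ z)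
      (𝓝[>] 0) (𝓝 0) := by
  have coeff : Tendsto (fun q : ℝ ↦ q * z / (2 * (1 - q))) (𝓝 0) (𝓝 0) := by
    simpa [Pi.div_def] using
      (tendsto_id.mul_const z).div (tendsto_one_sub_zero.const_mul 2) (by norm_num)
  simpa [mul_div_assoc] using
    (coeff.mono_left nhdsWithin_le_nhds).mul (tendsto_regBeta_four_mul_div_rpow hz)

lemma tendsto_hashRatio_rpow_mul_regBeta_sq_div_rpow (hz : 0 < z) (hzA : z < A + 1) :
    Tendsto (fun q ↦ (A + 1) * hashRatio q ^ (A + 1)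
        / ((1 - q) * (1 - hashRatio q) ^ 3 * bracket (hashRatio q) (A + 1) ^ 2)
        * regBeta ((1 - q - q) ^ 2) (1 / 2) z / q ^ z) (𝓝[>] 0) (𝓝 0) := by
  have coeff : Tendsto (fun q ↦ (A + 1)
      / ((1 - q) * (1 - hashRatio q) ^ 3 * bracket (hashRatio q) (A + 1) ^ 2))
      (𝓝 0) (𝓝 (A + 1)) := by
    simpa [Pi.div_def] using tendsto_const_nhds.div ((tendsto_one_sub_zero.mul
      (tendsto_one_sub_hashRatio.pow 3)).mul
      ((tendsto_bracket_hashRatio (hz.trans hzA)).pow 2)) (by norm_num)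
  have h := ((coeff.mono_left nhdsWithin_le_nhds).mul
    (tendsto_regBeta_sq_nhdsGT_zero one_half_pos hz)).mul (tendsto_hashRatio_rpow_div_rpow hzA)
  rw [mul_zero] at h
  exact h.congr fun q ↦ by ring

lemma tendsto_rpow_div_Beta_div_rpow (hA : 0 < A + 1) :
    Tendsto (fun q ↦ (2 - hashRatio q + hashRatio q ^ (A + 2))
        / ((1 - hashRatio q) ^ 2 * bracket (hashRatio q) (A + 1))
        * ((1 - q) ^ (z - 1) * q ^ z / Beta z z) / q ^ z) (𝓝[>] 0) (𝓝 (2 / Beta z z)) := by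
  have coeff : Tendsto (fun q ↦ (2 - hashRatio q + hashRatio q ^ (A + 2))
      / ((1 - hashRatio q) ^ 2 * bracket (hashRatio q) (A + 1))) (𝓝 0) (𝓝 2) := by
    simpa [Pi.div_def] using ((tendsto_const_nhds.sub tendsto_hashRatio_zero).add
      (tendsto_hashRatio_rpow_zero (show 0 < A + 2 by linarith))).div
      ((tendsto_one_sub_hashRatio.pow 2).mul (tendsto_bracket_hashRatio hA)) (by norm_num)
  have power : Tendsto (fun q : ℝ ↦ (1 - q) ^ (z - 1) / Beta z z) (𝓝 0) (𝓝 (1 / Beta z z)) := by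
    simpa using (tendsto_one_sub_zero.rpow_const (.inl one_ne_zero)).div_const (Beta z z)
  have h := (coeff.mul power).mono_left (nhdsWithin_le_nhds (s := Ioi 0))
  rw [mul_one_div] at h
  refine h.congr' ?_
  filter_upwards [self_mem_nhdsWithin] with q hq
  have := (Real.rpow_pos_of_pos hq z).ne'
  field_simp

lemma tendsto_successProb_div_rpow (hz : 0 < z) (hzA : z < A + 1) :
    Tendsto (fun q ↦ successProb A z q / q ^ z) (𝓝[>] 0) (𝓝 (2 / (z * Beta z z))) := by
  have denom : Tendsto (fun q ↦ 1 - hashRatio q ^ (A + 1)) (𝓝[>] 0) (𝓝 1) := by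
    simpa using (tendsto_const_nhds.sub
      (tendsto_hashRatio_rpow_zero (hz.trans hzA))).mono_left nhdsWithin_le_nhds
  have h := ((tendsto_regBeta_four_mul_div_rpow hz).sub
    (tendsto_hashRatio_rpow_div_rpow hzA)).div denom one_ne_zero
  rw [sub_zero, div_one] at h
  refine h.congr fun q ↦ ?_
  rw [Pi.div_apply, ← sub_div, div_right_comm, successProb]

end Terms

theorem nakamoto_revenue_small_q_general {A z : ℝ} (hz : 0 < z) (hzA : z < A + 1) (v : ℝ) :
    Tendsto (fun q ↦ attackRevenue A z v q / q ^ z) (𝓝[>] 0)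
      (𝓝 (2 / (z * Beta z z) * (v + 1) + 2 / Beta z z)) := by
  have h := (((tendsto_mul_regBeta_four_mul_div_rpow hz).sub
    (tendsto_hashRatio_rpow_mul_regBeta_sq_div_rpow hz hzA)).add
    (tendsto_rpow_div_Beta_div_rpow (z := z) (hz.trans hzA))).add
    ((tendsto_successProb_div_rpow hz hzA).mul_const (v + 1))
  rw [sub_zero, zero_add, add_comm (2 / Beta z z)] at h
  exact h.congr fun q ↦ by rw [attackRevenue]; ring

/-- `R(q)/q^z → 2 C(2z-1,z)(v+1) + 2/B(z,z)` as `q → 0⁺`. -/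
theorem nakamoto_revenue_small_q (A z : ℕ) (hA2 : 2 ≤ A) (hz : 1 ≤ z) (hAz : z ≤ A)
    (v : ℝ) (hv : 0 ≤ v) :
    Tendsto (fun q : ℝ =>
        (let p : ℝ := 1 - q
         let lam : ℝ := q / p
         q * (z : ℝ) / (2 * p) * regBeta (4 * p * q) (z : ℝ) (1 / 2)
          - ((A : ℝ) + 1) * lam ^ (A + 1)
              / (p * (1 - lam) ^ 3 * ((1 - lam ^ (A + 1)) / (1 - lam)) ^ 2)
              * regBeta ((p - q) ^ 2) (1 / 2) (z : ℝ)
          + (2 - lam + lam ^ (A + 2))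
              / ((1 - lam) ^ 2 * ((1 - lam ^ (A + 1)) / (1 - lam)))
              * (p ^ (z - 1) * q ^ z / Beta (z : ℝ) (z : ℝ))
          + ((regBeta (4 * p * q) (z : ℝ) (1 / 2) - lam ^ (A + 1)) / (1 - lam ^ (A + 1)))
              * (v + 1)) / q ^ z)
      (nhdsWithin 0 (Set.Ioi 0))
      (nhds (2 * ((2 * z - 1).choose z : ℝ) * (v + 1) + 2 / Beta (z : ℝ) (z : ℝ))) := by
  have h := nakamoto_revenue_small_q_general (A := A) (z := z) (Nat.cast_pos.2 hz)
    (by exact_mod_cast Nat.lt_succ_of_le hAz) v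
  rw [two_div_natCast_mul_Beta_self hz] at h
  have add_two : (A : ℝ) + 2 = (A + 2 : ℕ) := by push_cast; rfl
  exact h.congr fun q ↦ by simp only [attackRevenue, successProb, bracket, hashRatio,
    ← Nat.cast_pred hz, ← Nat.cast_add_one, add_two, Real.rpow_natCast]
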